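/- Let Ω₀ ⊆ ℝ² be a nonempty connected open set and let φ : Ω₀ → ℝ be twice continuously differentiable on Ω₀. Suppose that Δφ + 2 = 0 on Ω₀ and that φ + ½|∇φ|² is constant on Ω₀. Then there exist a constant vector u₀ ∈ ℝ² and a constant k ∈ ℝ such that φ(ξ) = −½|ξ|² + u₀·ξ + k for all ξ ∈ Ω₀. -/

import Mathlib

open Set Filter

/-- First partial derivative in the `ξ₁`-direction. -/
noncomputable def pd1 (φ : ℝ × ℝ → ℝ) (p : ℝ × ℝ) : ℝ :=
  deriv (fun x => φ (x, p.2)) p.1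

/-- First partial derivative in the `ξ₂`-direction. -/
noncomputable def pd2 (φ : ℝ × ℝ → ℝ) (p : ℝ × ℝ) : ℝ :=
  deriv (fun y => φ (p.1, y)) p.2

theorem aux_pd1 (f : ℝ × ℝ → ℝ) (p : ℝ × ℝ) (h : DifferentiableAt ℝ f p) :
    pd1 f p = fderiv ℝ f p (1, 0) := by
  have h1 : HasDerivAt (fun x : ℝ => (x, p.2)) ((1 : ℝ), (0 : ℝ)) p.1 :=
    (hasDerivAt_id p.1).prodMk (hasDerivAt_const p.1 p.2)
  have h2 : HasFDerivAt f (fderiv ℝ f p) ((fun x : ℝ => (x, p.2)) p.1) := h.hasFDerivAt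
  exact (h2.comp_hasDerivAt p.1 h1).deriv

theorem aux_pd2 (f : ℝ × ℝ → ℝ) (p : ℝ × ℝ) (h : DifferentiableAt ℝ f p) :
    pd2 f p = fderiv ℝ f p (0, 1) := by
  have h1 : HasDerivAt (fun x : ℝ => (p.1, x)) ((0 : ℝ), (1 : ℝ)) p.2 :=
    (hasDerivAt_const p.2 p.1).prodMk (hasDerivAt_id p.2)
  have h2 : HasFDerivAt f (fderiv ℝ f p) ((fun x : ℝ => (p.1, x)) p.2) := h.hasFDerivAt
  exact (h2.comp_hasDerivAt p.2 h1).deriv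

theorem aux_ext (L M : ℝ × ℝ →L[ℝ] ℝ) (h1 : L (1, 0) = M (1, 0)) (h2 : L (0, 1) = M (0, 1)) :
    L = M := by
  ext
  · simpa using h1
  · simpa using h2

theorem aux_const (s : Set (ℝ × ℝ)) (hs : IsOpen s) (hc : IsConnected s) (f : ℝ × ℝ → ℝ)
    (hf : ∀ p ∈ s, HasFDerivAt f (0 : ℝ × ℝ →L[ℝ] ℝ) p) : ∃ k, ∀ p ∈ s, f p = k := by
  obtain ⟨a, ha⟩ := hs.exists_is_const_of_fderiv_eq_zero hc.isPreconnected
    (fun p hp => (hf p hp).differentiableAt.differentiableWithinAt)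
    (fun p hp => (hf p hp).fderiv)
  exact ⟨a, ha⟩

/-- Any `C²` pseudo-potential on a nonempty connected open set `Ω₀ ⊆ ℝ²` satisfying
`Δφ + 2 = 0` together with the pseudo-Bernoulli law `φ + ½|∇φ|² = const` is of the form
`φ(ξ) = −½|ξ|² + u₀·ξ + k`. -/
theorem stmt3
    (Ω₀ : Set (ℝ × ℝ)) (hne : Ω₀.Nonempty) (hconn : IsConnected Ω₀) (hopen : IsOpen Ω₀)
    (φ : ℝ × ℝ → ℝ)
    (hC2 : ContDiffOn ℝ 2 φ Ω₀)
    (hlap : ∀ p ∈ Ω₀, pd1 (pd1 φ) p + pd2 (pd2 φ) p + 2 = 0)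
    (hbern : ∃ c : ℝ, ∀ p ∈ Ω₀, φ p + (pd1 φ p ^ 2 + pd2 φ p ^ 2) / 2 = c) :
    ∃ u₀ : ℝ × ℝ, ∃ k : ℝ, ∀ p ∈ Ω₀,
      φ p = -(p.1 ^ 2 + p.2 ^ 2) / 2 + (u₀.1 * p.1 + u₀.2 * p.2) + k := by
  obtain ⟨c, hbern⟩ := hbern
  have hA : ∀ p ∈ Ω₀, ContDiffAt ℝ 2 φ p := fun p hp => hC2.contDiffAt (hopen.mem_nhds hp)
  have hd : ∀ p ∈ Ω₀, DifferentiableAt ℝ φ p := fun p hp => (hA p hp).differentiableAt (by simp)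
  have hF1 : ∀ p ∈ Ω₀, ContDiffAt ℝ 1 (fderiv ℝ φ) p := fun p hp =>
    (hA p hp).fderiv_right (by norm_num)
  have hFd : ∀ p ∈ Ω₀, HasFDerivAt (fderiv ℝ φ) (fderiv ℝ (fderiv ℝ φ) p) p := fun p hp =>
    ((hF1 p hp).differentiableAt (by simp)).hasFDerivAt
  have hGc : ∀ p ∈ Ω₀, ContinuousAt (fderiv ℝ (fderiv ℝ φ)) p := fun p hp =>
    ((hF1 p hp).fderiv_right (m := 0) (by norm_num)).continuousAt
  have e1 : ∀ p ∈ Ω₀, pd1 φ =ᶠ[nhds p] fun q => fderiv ℝ φ q (1, 0) := fun p hp => by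
    filter_upwards [hopen.mem_nhds hp] with q hq using aux_pd1 φ q (hd q hq)
  have e2 : ∀ p ∈ Ω₀, pd2 φ =ᶠ[nhds p] fun q => fderiv ℝ φ q (0, 1) := fun p hp => by
    filter_upwards [hopen.mem_nhds hp] with q hq using aux_pd2 φ q (hd q hq)
  have g1 : ∀ p ∈ Ω₀, HasFDerivAt (pd1 φ) ((fderiv ℝ (fderiv ℝ φ) p).flip (1, 0)) p :=
    fun p hp => by
      refine HasFDerivAt.congr_of_eventuallyEq ?_ (e1 p hp)
      refine ((hFd p hp).clm_apply (hasFDerivAt_const ((1 : ℝ), (0 : ℝ)) p)).congr_fderiv ?_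
      ext <;> simp
  have g2 : ∀ p ∈ Ω₀, HasFDerivAt (pd2 φ) ((fderiv ℝ (fderiv ℝ φ) p).flip (0, 1)) p :=
    fun p hp => by
      refine HasFDerivAt.congr_of_eventuallyEq ?_ (e2 p hp)
      refine ((hFd p hp).clm_apply (hasFDerivAt_const ((0 : ℝ), (1 : ℝ)) p)).congr_fderiv ?_
      ext <;> simp
  have hsymm : ∀ p ∈ Ω₀, fderiv ℝ (fderiv ℝ φ) p (1, 0) (0, 1)
      = fderiv ℝ (fderiv ℝ φ) p (0, 1) (1, 0) := fun p hp =>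
    (hA p hp).isSymmSndFDerivAt (by simp) _ _
  have hl : ∀ p ∈ Ω₀, fderiv ℝ (fderiv ℝ φ) p (1, 0) (1, 0)
      + fderiv ℝ (fderiv ℝ φ) p (0, 1) (0, 1) + 2 = 0 := fun p hp => by
    have := hlap p hp
    rw [aux_pd1 _ p (g1 p hp).differentiableAt, aux_pd2 _ p (g2 p hp).differentiableAt,
      (g1 p hp).fderiv, (g2 p hp).fderiv] at this
    simpa using this
  have hB : ∀ p ∈ Ω₀, fderiv ℝ φ p + (pd1 φ p • (fderiv ℝ (fderiv ℝ φ) p).flip (1, 0)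
      + pd2 φ p • (fderiv ℝ (fderiv ℝ φ) p).flip (0, 1)) = 0 := fun p hp => by
    have h1 : HasFDerivAt (fun q => φ q + (pd1 φ q * pd1 φ q + pd2 φ q * pd2 φ q) * (1 / 2)) _ p :=
      (hd p hp).hasFDerivAt.add ((((g1 p hp).mul (g1 p hp)).add
      ((g2 p hp).mul (g2 p hp))).mul_const (1 / 2))
    have h2 : HasFDerivAt (fun q => φ q + (pd1 φ q * pd1 φ q + pd2 φ q * pd2 φ q) * (1 / 2))
        (0 : ℝ × ℝ →L[ℝ] ℝ) p := by
      refine (hasFDerivAt_const c p).congr_of_eventuallyEq ?_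
      filter_upwards [hopen.mem_nhds hp] with q hq
      rw [← hbern q hq]; ring
    rw [← h1.unique h2]
    apply ContinuousLinearMap.ext
    intro v
    simp
    ring
  have key : ∀ p ∈ Ω₀, (1 + fderiv ℝ (fderiv ℝ φ) p (1, 0) (1, 0)) ^ 2
      + (fderiv ℝ (fderiv ℝ φ) p (0, 1) (1, 0)) ^ 2 = 0 := by
    intro p hp
    by_contra hn
    have hc : ContinuousAt (fun q => (1 + fderiv ℝ (fderiv ℝ φ) q (1, 0) (1, 0)) ^ 2
      + (fderiv ℝ (fderiv ℝ φ) q (0, 1) (1, 0)) ^ 2) p := by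
      have := hGc p hp
      fun_prop
    have hz : ∀ᶠ q in nhds p, pd1 φ q = 0 ∧ pd2 φ q = 0 := by
      filter_upwards [hopen.mem_nhds hp, hc.eventually_ne hn] with q hq hq0
      have b1 := congrArg (fun L => L ((1 : ℝ), (0 : ℝ))) (hB q hq)
      have b2 := congrArg (fun L => L ((0 : ℝ), (1 : ℝ))) (hB q hq)
      simp only [add_apply, smul_apply, zero_apply,
        ContinuousLinearMap.flip_apply, smul_eq_mul] at b1 b2
      rw [← aux_pd1 φ q (hd q hq), hsymm q hq] at b1
      rw [← aux_pd2 φ q (hd q hq)] at b2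
      have l := hl q hq
      generalize fderiv ℝ (fderiv ℝ φ) q (1, 0) (1, 0) = a at *
      generalize fderiv ℝ (fderiv ℝ φ) q (0, 1) (1, 0) = b at *
      have hd' : fderiv ℝ (fderiv ℝ φ) q (0, 1) (0, 1) = -2 - a := by linarith
      rw [hd'] at b2
      constructor
      · refine (mul_eq_zero.mp ?_).resolve_left hq0
        linear_combination (1 + a) * b1 + b * b2
      · refine (mul_eq_zero.mp ?_).resolve_left hq0
        linear_combination b * b1 - (1 + a) * b2
    have z1 := (g1 p hp).unique ((hasFDerivAt_const (0 : ℝ) p).congr_of_eventuallyEq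
      (hz.mono fun q h => h.1))
    have z2 := (g2 p hp).unique ((hasFDerivAt_const (0 : ℝ) p).congr_of_eventuallyEq
      (hz.mono fun q h => h.2))
    have w1 := congrArg (fun L => L ((1 : ℝ), (0 : ℝ))) z1
    have w2 := congrArg (fun L => L ((0 : ℝ), (1 : ℝ))) z2
    simp at w1 w2
    have := hl p hp
    rw [w1, w2] at this
    norm_num at this
  have ha : ∀ p ∈ Ω₀, fderiv ℝ (fderiv ℝ φ) p (1, 0) (1, 0) = -1 := fun p hp => by
    nlinarith [key p hp, sq_nonneg (1 + fderiv ℝ (fderiv ℝ φ) p (1, 0) (1, 0)),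
      sq_nonneg (fderiv ℝ (fderiv ℝ φ) p (0, 1) (1, 0))]
  have hb : ∀ p ∈ Ω₀, fderiv ℝ (fderiv ℝ φ) p (0, 1) (1, 0) = 0 := fun p hp => by
    have := key p hp
    rw [ha p hp] at this
    simpa using this
  obtain ⟨u, hu⟩ := aux_const Ω₀ hopen hconn (fun q => pd1 φ q + q.1) fun p hp => by
    refine ((g1 p hp).add hasFDerivAt_fst).congr_fderiv ?_
    apply aux_ext
    · simp [ha p hp]
    · simp [hb p hp]
  obtain ⟨v, hv⟩ := aux_const Ω₀ hopen hconn (fun q => pd2 φ q + q.2) fun p hp => by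
    refine ((g2 p hp).add hasFDerivAt_snd).congr_fderiv ?_
    apply aux_ext
    · simp [hsymm p hp, hb p hp]
    · have := hl p hp
      rw [ha p hp] at this
      simp
      linarith
  obtain ⟨k, hk⟩ := aux_const Ω₀ hopen hconn
    (fun q => φ q + (q.1 * q.1 + q.2 * q.2) * (1 / 2) - (u * q.1 + v * q.2)) fun p hp => by
    have f1 : HasFDerivAt (fun q : ℝ × ℝ => q.1) (ContinuousLinearMap.fst ℝ ℝ ℝ) p :=
      hasFDerivAt_fst
    have f2 : HasFDerivAt (fun q : ℝ × ℝ => q.2) (ContinuousLinearMap.snd ℝ ℝ ℝ) p :=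
      hasFDerivAt_snd
    refine (((hd p hp).hasFDerivAt.add (((f1.mul f1).add (f2.mul f2)).mul_const (1 / 2))).sub
      ((f1.const_mul u).add (f2.const_mul v))).congr_fderiv ?_
    have h1 := hu p hp
    have h2 := hv p hp
    rw [aux_pd1 φ p (hd p hp)] at h1
    rw [aux_pd2 φ p (hd p hp)] at h2
    apply aux_ext
    · simp
      linarith
    · simp
      linarith
  refine ⟨(u, v), k, fun p hp => ?_⟩
  have := hk p hp
  dsimp only at this ⊢
  linarith
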